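/- Suppose C is a binary self-dual [48,24,10] code with an automorphism σ of order 11 of type 11-(4,4) (four 11-cycles and four fixed points). Then the projection π(F_σ(C)) is a binary self-dual code of length 8 all of whose codewords, when lifted back, have weight ≥ 10; consequently π(F_σ(C)) is, up to permutation of the last four coordinates, the code generated by (I_4 | I_4 + J_4), where I_4 is the 4×4 identity matrix and J_4 the 4×4 all-ones matrix. -/

import Mathlib

open Finset

/-- Hamming weight of a binary vector. -/
def wt {ι : Type*} [Fintype ι] (v : ι → ZMod 2) : ℕ :=
  (Finset.univ.filter fun i => v i ≠ 0).card

/-- Dual of a binary code under the standard dot product. -/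
def dualCode {ι : Type*} [Fintype ι] (C : Submodule (ZMod 2) (ι → ZMod 2)) :
    Submodule (ZMod 2) (ι → ZMod 2) where
  carrier := {x | ∀ c ∈ C, ∑ i, x i * c i = 0}
  add_mem' := by
    intro a b ha hb c hc
    have := ha c hc; have := hb c hc
    simp only [Pi.add_apply, add_mul, Finset.sum_add_distrib]
    simp [ha c hc, hb c hc]
  zero_mem' := by intro c hc; simp
  smul_mem' := by
    intro r a ha c hc
    simp only [Pi.smul_apply, smul_eq_mul, mul_assoc, ← Finset.mul_sum]
    simp [ha c hc]

/-- Fixed subcode F_σ(C). -/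
def fixedCode {ι : Type*} (σ : Equiv.Perm ι) (C : Submodule (ZMod 2) (ι → ZMod 2)) :
    Submodule (ZMod 2) (ι → ZMod 2) where
  carrier := {v | v ∈ C ∧ v ∘ σ = v}
  add_mem' := by
    rintro a b ⟨ha, ha'⟩ ⟨hb, hb'⟩
    refine ⟨C.add_mem ha hb, ?_⟩
    funext i
    simpa using congrFun (congrArg₂ (· + ·) ha' hb') i
  zero_mem' := ⟨C.zero_mem, rfl⟩
  smul_mem' := by
    rintro r a ⟨ha, ha'⟩
    exact ⟨C.smul_mem r ha, by funext i; simpa using congrArg (r • ·) (congrFun ha' i)⟩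

/-- Subcode E_σ(C): codewords with even weight on each cycle (and zero on fixed points). -/
def evenCode {ι : Type*} (p : ℕ) (σ : Equiv.Perm ι) (C : Submodule (ZMod 2) (ι → ZMod 2)) :
    Submodule (ZMod 2) (ι → ZMod 2) where
  carrier := {v | v ∈ C ∧ ∀ i, ∑ k ∈ Finset.range p, v ((σ ^ k) i) = 0}
  add_mem' := by
    rintro a b ⟨ha, ha'⟩ ⟨hb, hb'⟩
    refine ⟨C.add_mem ha hb, fun i => ?_⟩
    simp [Finset.sum_add_distrib, ha' i, hb' i]
  zero_mem' := ⟨C.zero_mem, by simp⟩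
  smul_mem' := by
    rintro r a ⟨ha, ha'⟩
    refine ⟨C.smul_mem r ha, fun i => ?_⟩
    simp only [Pi.smul_apply, smul_eq_mul]
    rw [← Finset.mul_sum, ha' i, mul_zero]

/-- Coordinate index set for an automorphism of type p-(c,f): `c` cycles of
length `p` followed by `f` fixed points. -/
abbrev Idx (p c f : ℕ) : Type := (Fin c × Fin p) ⊕ Fin f

/-- The standard permutation with `c` cycles of length `p` and `f` fixed points. -/
def stdPerm (p c f : ℕ) : Equiv.Perm (Idx p c f) :=
  Equiv.sumCongr (Equiv.prodCongr (Equiv.refl (Fin c)) (finRotate p)) (Equiv.refl (Fin f))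

/-- The projection π recording one bit per cycle and the fixed-point bits. -/
def proj (p c f : ℕ) [NeZero p] :
    (Idx p c f → ZMod 2) →ₗ[ZMod 2] ((Fin c ⊕ Fin f) → ZMod 2) where
  toFun v := Sum.elim (fun j => v (Sum.inl (j, 0))) (fun l => v (Sum.inr l))
  map_add' := by intro a b; funext i; cases i <;> simp
  map_smul' := by intro r a; funext i; cases i <;> simp

lemma wt_add {ι : Type*} [Fintype ι] (u v : ι → ZMod 2) :
    wt (u + v) + 2 * wt (u * v) = wt u + wt v := by
  have key : ∀ a b : ZMod 2, (if a + b ≠ 0 then 1 else 0) + 2 * (if a * b ≠ 0 then 1 else 0) =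
      (if a ≠ 0 then 1 else 0) + (if b ≠ 0 then 1 else 0) := by decide
  simp only [wt, Finset.card_filter, Finset.mul_sum, ← Finset.sum_add_distrib]
  exact Finset.sum_congr rfl fun i _ => key (u i) (v i)

lemma natCast_wt {ι : Type*} [Fintype ι] (v : ι → ZMod 2) : (wt v : ZMod 2) = ∑ i, v i := by
  have key : ∀ a : ZMod 2, (if a ≠ 0 then 1 else 0) = a := by decide
  simp only [wt, Finset.card_filter, Nat.cast_sum, Nat.cast_ite, Nat.cast_one, Nat.cast_zero, key]

lemma wt_comp_equiv {ι κ : Type*} [Fintype ι] [Fintype κ] (σ : ι ≃ κ) (v : κ → ZMod 2) :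
    wt (v ∘ σ) = wt v := by
  simp only [wt, Finset.card_filter]
  exact Equiv.sum_comp σ fun i => if v i ≠ 0 then 1 else 0

/-- In a self-orthogonal binary code, the weight is additive modulo `4`. -/
lemma wt_sum_modEq_four {ι κ : Type*} [Fintype ι] {C : Submodule (ZMod 2) (ι → ZMod 2)}
    (hC : C ≤ dualCode C) (s : Finset κ) (v : κ → ι → ZMod 2) (hv : ∀ k ∈ s, v k ∈ C) :
    wt (∑ k ∈ s, v k) ≡ ∑ k ∈ s, wt (v k) [MOD 4] := by
  classical
  induction s using Finset.induction_on with
  | empty => simp [wt, Nat.ModEq]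
  | insert k s hk ih =>
    have ih := ih fun j hj => hv j (Finset.mem_insert_of_mem hj)
    have hsum : ∑ j ∈ s, v j ∈ C :=
      C.sum_mem fun j hj => hv j (Finset.mem_insert_of_mem hj)
    have horth : ((wt (v k * ∑ j ∈ s, v j) : ℕ) : ZMod 2) = 0 := by
      rw [natCast_wt]
      exact hC (hv k (Finset.mem_insert_self k s)) _ hsum
    rw [ZMod.natCast_eq_zero_iff] at horth
    have hadd := wt_add (v k) (∑ j ∈ s, v j)
    rw [Finset.sum_insert hk, Finset.sum_insert hk]
    unfold Nat.ModEq at *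
    omega

/-- The sum of the translates of `v` under the first `p` powers of `σ`. -/
def orbitSum {ι : Type*} (p : ℕ) (σ : Equiv.Perm ι) (v : ι → ZMod 2) : ι → ZMod 2 :=
  ∑ k ∈ Finset.range p, v ∘ (σ ^ k : Equiv.Perm ι)

section Automorphism

variable {ι : Type*} {p : ℕ} {σ : Equiv.Perm ι} {C : Submodule (ZMod 2) (ι → ZMod 2)}

lemma comp_pow_mem (haut : ∀ v, v ∈ C ↔ v ∘ σ ∈ C) {v : ι → ZMod 2} (hv : v ∈ C) (k : ℕ) :
    v ∘ (σ ^ k : Equiv.Perm ι) ∈ C := by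
  induction k with
  | zero => simpa using hv
  | succ k ih => simpa [pow_succ, Function.comp_assoc] using (haut _).1 ih

lemma comp_pow_eq {v : ι → ZMod 2} (hv : v ∘ σ = v) (k : ℕ) :
    v ∘ (σ ^ k : Equiv.Perm ι) = v := by
  induction k with
  | zero => simp
  | succ k ih =>
    rw [pow_succ, Equiv.Perm.coe_mul, ← Function.comp_assoc, ih, hv]

lemma orbitSum_mem_fixedCode (hσ : σ ^ p = 1) (haut : ∀ v, v ∈ C ↔ v ∘ σ ∈ C)
    {v : ι → ZMod 2} (hv : v ∈ C) : orbitSum p σ v ∈ fixedCode σ C := by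
  refine ⟨C.sum_mem fun k _ => comp_pow_mem haut hv k, ?_⟩
  funext i
  have h₁ := Finset.sum_range_succ (fun k => v ((σ ^ k) i)) p
  have h₂ := Finset.sum_range_succ' (fun k => v ((σ ^ k) i)) p
  rw [h₁] at h₂
  simp only [hσ, pow_zero, add_left_inj] at h₂
  simp only [orbitSum, Function.comp_apply, Finset.sum_apply]
  rw [h₂]
  simp only [pow_succ, Equiv.Perm.coe_mul, Function.comp_apply]

variable [Fintype ι]

lemma sum_mul_orbitSum (hp : Odd p) {x : ι → ZMod 2} (hx : x ∘ σ = x) (v : ι → ZMod 2) :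
    ∑ i, x i * orbitSum p σ v i = ∑ i, x i * v i := by
  have hshift : ∀ k : ℕ, ∑ i, x i * v ((σ ^ k) i) = ∑ i, x i * v i := fun k => by
    rw [← Equiv.sum_comp (σ ^ k) fun i => x i * v i]
    exact Finset.sum_congr rfl fun i _ => by
      rw [show x ((σ ^ k) i) = x i from congrFun (comp_pow_eq hx k) i]
  simp only [orbitSum, Finset.sum_apply, Function.comp_apply, Finset.mul_sum]
  rw [Finset.sum_comm]
  simp [hshift, (ZMod.natCast_eq_one_iff_odd).2 hp]

lemma wt_orbitSum_modEq_four (hC : C ≤ dualCode C) (haut : ∀ v, v ∈ C ↔ v ∘ σ ∈ C)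
    {v : ι → ZMod 2} (hv : v ∈ C) : wt (orbitSum p σ v) ≡ p * wt v [MOD 4] := by
  simpa [orbitSum, wt_comp_equiv] using wt_sum_modEq_four hC (Finset.range p)
    (fun k => v ∘ (σ ^ k : Equiv.Perm ι)) fun k _ => comp_pow_mem haut hv k

end Automorphism

lemma finRotate_pow_apply (p : ℕ) [NeZero p] (k : ℕ) (i : Fin p) :
    (finRotate p ^ k) i = i + Fin.ofNat p k := by
  induction k with
  | zero => simp
  | succ k ih =>
    rw [pow_succ', Equiv.Perm.mul_apply, ih, finRotate_apply]
    ext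
    simp [Fin.val_add, add_assoc]

section StandardPerm

variable {p c f : ℕ}

lemma stdPerm_pow_inl [NeZero p] (k : ℕ) (j : Fin c) (i : Fin p) :
    (stdPerm p c f ^ k) (Sum.inl (j, i)) = Sum.inl (j, i + Fin.ofNat p k) := by
  rw [← finRotate_pow_apply]
  induction k with
  | zero => simp
  | succ k ih => rw [pow_succ', Equiv.Perm.mul_apply, ih, pow_succ']; rfl

lemma stdPerm_pow_inr (k : ℕ) (l : Fin f) :
    (stdPerm p c f ^ k) (Sum.inr l) = Sum.inr l := by
  induction k with
  | zero => simp
  | succ k ih => rw [pow_succ', Equiv.Perm.mul_apply, ih]; rfl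

lemma stdPerm_pow_eq_one [NeZero p] : stdPerm p c f ^ p = 1 := by
  ext1 x
  rcases x with ⟨j, i⟩ | l
  · simp [stdPerm_pow_inl]
  · simp [stdPerm_pow_inr]

/-- The vector which is constant on each cycle, with prescribed projection. -/
def liftVec (p : ℕ) {c f : ℕ} (w : Fin c ⊕ Fin f → ZMod 2) : Idx p c f → ZMod 2 :=
  Sum.elim (fun x => w (Sum.inl x.1)) fun l => w (Sum.inr l)

lemma liftVec_comp_stdPerm (w : Fin c ⊕ Fin f → ZMod 2) :
    liftVec p w ∘ stdPerm p c f = liftVec p w := by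
  funext x
  rcases x with ⟨j, i⟩ | l <;> rfl

lemma proj_liftVec [NeZero p] (w : Fin c ⊕ Fin f → ZMod 2) : proj p c f (liftVec p w) = w := by
  funext x
  rcases x with j | l <;> rfl

lemma liftVec_proj [NeZero p] {v : Idx p c f → ZMod 2} (hv : v ∘ stdPerm p c f = v) :
    liftVec p (proj p c f v) = v := by
  funext x
  rcases x with ⟨j, i⟩ | l
  · have h := congrFun (comp_pow_eq hv i.val) (Sum.inl (j, 0))
    simpa [stdPerm_pow_inl, liftVec, proj] using h.symm
  · rfl

lemma mem_map_proj_fixedCode [NeZero p] {C : Submodule (ZMod 2) (Idx p c f → ZMod 2)}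
    {w : Fin c ⊕ Fin f → ZMod 2} :
    w ∈ Submodule.map (proj p c f) (fixedCode (stdPerm p c f) C) ↔ liftVec p w ∈ C := by
  constructor
  · rintro ⟨v, ⟨hv, hfix⟩, rfl⟩
    rwa [liftVec_proj hfix]
  · exact fun h => ⟨liftVec p w, ⟨h, liftVec_comp_stdPerm w⟩, proj_liftVec w⟩

lemma sum_liftVec_mul_liftVec (hp : Odd p) (u w : Fin c ⊕ Fin f → ZMod 2) :
    ∑ i, liftVec p u i * liftVec p w i = ∑ i, u i * w i := by
  simp [liftVec, Fintype.sum_sum_type, Fintype.sum_prod_type,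
    (ZMod.natCast_eq_one_iff_odd).2 hp]

lemma wt_liftVec (w : Fin c ⊕ Fin f → ZMod 2) :
    wt (liftVec p w) = p * wt (fun j => w (Sum.inl j)) + wt (fun l => w (Sum.inr l)) := by
  simp only [wt, Finset.card_filter, Finset.mul_sum]
  rw [Fintype.sum_sum_type, Fintype.sum_prod_type]
  congr 1
  refine Finset.sum_congr rfl fun j _ => ?_
  by_cases h : w (Sum.inl j) = 0 <;> simp [liftVec, h]

/-- The projection of the fixed subcode of a self-dual code is self-dual. -/
theorem map_proj_fixedCode_eq_dualCode [NeZero p] (hp : Odd p)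
    {C : Submodule (ZMod 2) (Idx p c f → ZMod 2)} (hself : C = dualCode C)
    (haut : ∀ v, v ∈ C ↔ v ∘ stdPerm p c f ∈ C) :
    Submodule.map (proj p c f) (fixedCode (stdPerm p c f) C) =
      dualCode (Submodule.map (proj p c f) (fixedCode (stdPerm p c f) C)) := by
  apply le_antisymm
  · intro w hw u hu
    rw [mem_map_proj_fixedCode] at hw hu
    rw [← sum_liftVec_mul_liftVec hp]
    exact hself.le hw _ hu
  · intro w hw
    rw [mem_map_proj_fixedCode, hself]
    intro v hv
    have hsum := orbitSum_mem_fixedCode stdPerm_pow_eq_one haut hv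
    rw [← sum_mul_orbitSum hp (liftVec_comp_stdPerm w), ← liftVec_proj hsum.2,
      sum_liftVec_mul_liftVec hp]
    exact hw _ ⟨_, hsum, rfl⟩

end StandardPerm

/-- A subspace orthogonal to no nonzero vector is the whole space. -/
lemma eq_top_of_dualCode_eq_bot {ι : Type*} [Fintype ι] {D : Submodule (ZMod 2) (ι → ZMod 2)}
    (hD : dualCode D = ⊥) : D = ⊤ := by
  classical
  by_contra hne
  obtain ⟨φ, hφ, hle⟩ := D.exists_le_ker_of_lt_top (lt_top_iff_ne_top.2 hne)
  have heval : ∀ v, ∑ i, φ (Pi.single i 1) * v i = φ v := fun v => by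
    conv_rhs => rw [pi_eq_sum_univ' v]
    simp [map_sum, mul_comm]
  have hmem : (fun i => φ (Pi.single i 1)) ∈ dualCode D := fun v hv => by
    rw [heval]; exact hle hv
  rw [hD, Submodule.mem_bot] at hmem
  apply hφ
  ext i
  simpa using congrFun hmem i

/-- A self-dual code of length `2n` with no nonzero word supported on the right half
has the left half as an information set. -/
lemma exists_mem_inl_eq {κ : Type*} [Fintype κ] {D : Submodule (ZMod 2) (κ ⊕ κ → ZMod 2)}
    (hself : D = dualCode D) (hD : ∀ w ∈ D, (∀ j, w (Sum.inl j) = 0) → w = 0) (u : κ → ZMod 2) :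
    ∃ w ∈ D, ∀ j, w (Sum.inl j) = u j := by
  let left := (LinearMap.funLeft (ZMod 2) (ZMod 2) (Sum.inl : κ → κ ⊕ κ)).comp D.subtype
  let right := (LinearMap.funLeft (ZMod 2) (ZMod 2) (Sum.inr : κ → κ ⊕ κ)).comp D.subtype
  have hleft : Function.Injective left := by
    rw [← LinearMap.ker_eq_bot, LinearMap.ker_eq_bot']
    exact fun w hw => Subtype.ext (hD w w.2 fun j => congrFun hw j)
  have hright : Function.Surjective right := by
    rw [← LinearMap.range_eq_top]
    apply eq_top_of_dualCode_eq_bot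
    rw [eq_bot_iff]
    intro z hz
    have hmem : Sum.elim (fun _ => 0) z ∈ D := by
      rw [hself]
      intro w hw
      simpa [right, Fintype.sum_sum_type, LinearMap.funLeft_apply] using hz _ ⟨⟨w, hw⟩, rfl⟩
    have hzero := hD _ hmem fun j => rfl
    exact funext fun j => congrFun hzero (Sum.inr j)
  have hrank : Module.finrank (ZMod 2) D = Module.finrank (ZMod 2) (κ → ZMod 2) :=
    le_antisymm (LinearMap.finrank_le_finrank_of_injective hleft)
      (LinearMap.finrank_le_finrank_of_surjective hright)
  obtain ⟨w, hw⟩ :=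
    (LinearMap.injective_iff_surjective_of_finrank_eq_finrank hrank).1 hleft u
  exact ⟨w, w.2, fun j => congrFun hw j⟩

/-- The rows of an orthogonal `4 × 4` binary matrix are either all unit vectors or all
complements of unit vectors. -/
lemma orthogonal_four_rows {A : Fin 4 → Fin 4 → ZMod 2}
    (hA : ∀ i j, ∑ l, A i l * A j l = if i = j then 1 else 0) :
    ∃ z : Equiv.Perm (Fin 4), (∀ i l, A i l = if l = z i then 1 else 0) ∨
      (∀ i l, A i l = if l = z i then 0 else 1) := by
  have hrow : ∀ a : Fin 4 → ZMod 2, ∑ l, a l * a l = 1 →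
      ∃ t : ZMod 2, ∃ z : Fin 4, ∀ l, a l = if l = z then t else t + 1 := by decide
  have hdot : ∀ s t : ZMod 2, ∀ x y : Fin 4,
      ∑ l, (if l = x then s else s + 1) * (if l = y then t else t + 1) =
        if x = y then (if s = t then (1 : ZMod 2) else 0) else (if s = t then 0 else 1) := by
    decide
  choose t z hz using fun i => hrow (A i) (by simpa using hA i i)
  have hortho : ∀ i j, i ≠ j → (z i = z j ↔ t i ≠ t j) := fun i j hij => by
    have h := hA i j
    simp only [hz, hdot, hij, if_false] at h
    split_ifs at h <;> simp_all
  have hconst : ∀ i j, t i = t j := fun i j => by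
    by_contra hne
    obtain ⟨k, hki, hkj⟩ : ∃ k : Fin 4, k ≠ i ∧ k ≠ j := by
      clear hne; revert i j; decide
    have hij : z i = z j := (hortho i j fun h => hne (h ▸ rfl)).2 hne
    have h₁ := hortho k i hki
    have h₂ := hortho k j hkj
    rw [hij] at h₁
    have key : ∀ a b c : ZMod 2, a ≠ b → ¬(c ≠ a ↔ c ≠ b) := by decide
    exact key _ _ _ hne (h₁.symm.trans h₂)
  have hinj : Function.Injective z := fun i j hij => by
    by_contra hne
    exact (hortho i j hne).1 hij (hconst i j)
  refine ⟨Equiv.ofBijective z (Finite.injective_iff_bijective.1 hinj), ?_⟩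
  have htwo : ∀ a : ZMod 2, a = 1 ∨ a = 0 := by decide
  refine (htwo (t 0)).imp (fun h i l => ?_) fun h i l => ?_
  · rw [hz, hconst i 0, h, Equiv.ofBijective_apply]; rfl
  · rw [hz, hconst i 0, h, Equiv.ofBijective_apply]; rfl

/-- A self-dual code of length `8` with no nonzero word supported on the last four coordinates
and a word whose lift has weight not divisible by `4` is generated by `(I₄ | I₄ + J₄)` up to a
permutation of the last four coordinates. -/
theorem exists_perm_eq_span_of_wt_mod_four {D : Submodule (ZMod 2) (Fin 4 ⊕ Fin 4 → ZMod 2)}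
    (hself : D = dualCode D) (hD : ∀ w ∈ D, (∀ j, w (Sum.inl j) = 0) → w = 0)
    {w₀ : Fin 4 ⊕ Fin 4 → ZMod 2} (hw₀ : w₀ ∈ D)
    (hwt : ¬ 4 ∣ 11 * wt (fun j => w₀ (Sum.inl j)) + wt (fun l => w₀ (Sum.inr l))) :
    ∃ τ : Equiv.Perm (Fin 4), D = Submodule.span (ZMod 2)
      {w : Fin 4 ⊕ Fin 4 → ZMod 2 | ∃ i : Fin 4,
        w = Sum.elim (fun j => if j = i then 1 else 0)
                     (fun l => if τ l = i then 0 else 1)} := by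
  choose r hrD hr using fun i : Fin 4 => exists_mem_inl_eq hself hD (Pi.single i 1)
  have hexpand : ∀ w ∈ D, w = ∑ i, w (Sum.inl i) • r i := fun w hw => by
    rw [← sub_eq_zero]
    refine hD _ (D.sub_mem hw (D.sum_mem fun i _ => D.smul_mem _ (hrD i))) fun j => ?_
    simp [Finset.sum_apply, hr, Pi.single_apply]
  obtain ⟨z, hz | hz⟩ := orthogonal_four_rows (A := fun i l => r i (Sum.inr l)) fun i j => by
    have h := hself.le (hrD i) _ (hrD j)
    simp only [Fintype.sum_sum_type, hr, Pi.single_apply, ite_mul, one_mul, zero_mul,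
      Finset.sum_ite_eq', Finset.mem_univ, if_true] at h
    rw [← sub_eq_zero, CharTwo.sub_eq_add, add_comm]
    exact h
  · have hcoord : (fun l => w₀ (Sum.inr l)) ∘ z = fun j => w₀ (Sum.inl j) := by
      funext j
      rw [Function.comp_apply, hexpand w₀ hw₀]
      simp [Finset.sum_apply, hz, hr, Pi.single_apply]
    rw [← hcoord, wt_comp_equiv] at hwt
    exact absurd ⟨3 * wt (fun l => w₀ (Sum.inr l)), by ring⟩ hwt
  · have hrow : ∀ i, r i = Sum.elim (fun j => if j = i then 1 else 0)
        (fun l => if z.symm l = i then 0 else 1) := fun i => by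
      funext x
      rcases x with j | l
      · simp [hr, Pi.single_apply]
      · simpa [Equiv.symm_apply_eq] using hz i l
    refine ⟨z.symm, le_antisymm (fun w hw => ?_) (Submodule.span_le.2 ?_)⟩
    · rw [hexpand w hw]
      exact Submodule.sum_mem _ fun i _ =>
        Submodule.smul_mem _ _ (Submodule.subset_span ⟨i, hrow i⟩)
    · rintro _ ⟨i, rfl⟩
      rw [← hrow i]
      exact hrD i

/-- For a binary self-dual [48,24,10] code with an automorphism of order 11 of type
11-(4,4) (standard form), the projection `π(F_σ(C))` is a self-dual code of length 8
all of whose nonzero words lift to weight ≥ 10; consequently, up to a permutation of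
the last four coordinates, it is generated by the rows of `(I₄ | I₄ + J₄)`. -/
theorem statement18
    (C : Submodule (ZMod 2) (Idx 11 4 4 → ZMod 2))
    (hself : C = dualCode C)
    (hdim : Module.finrank (ZMod 2) C = 24)
    (hmin : ∀ v ∈ C, v ≠ 0 → 10 ≤ wt v) (hex : ∃ v ∈ C, wt v = 10)
    (haut : ∀ v, v ∈ C ↔ v ∘ (stdPerm 11 4 4) ∈ C) :
    Submodule.map (proj 11 4 4) (fixedCode (stdPerm 11 4 4) C) =
      dualCode (Submodule.map (proj 11 4 4) (fixedCode (stdPerm 11 4 4) C)) ∧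
    (∀ w ∈ Submodule.map (proj 11 4 4) (fixedCode (stdPerm 11 4 4) C), w ≠ 0 →
      10 ≤ 11 * wt (fun j : Fin 4 => w (Sum.inl j)) + wt (fun l : Fin 4 => w (Sum.inr l))) ∧
    (∃ τ : Equiv.Perm (Fin 4),
      Submodule.map (proj 11 4 4) (fixedCode (stdPerm 11 4 4) C) =
        Submodule.span (ZMod 2)
          {w : Fin 4 ⊕ Fin 4 → ZMod 2 | ∃ i : Fin 4,
            w = Sum.elim (fun j => if j = i then 1 else 0)
                         (fun l => if τ l = i then 0 else 1)}) := by
  have hp : Odd 11 := by decide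
  have hself' := map_proj_fixedCode_eq_dualCode hp hself haut
  have hlift : ∀ w ∈ Submodule.map (proj 11 4 4) (fixedCode (stdPerm 11 4 4) C), w ≠ 0 →
      10 ≤ 11 * wt (fun j : Fin 4 => w (Sum.inl j)) +
        wt (fun l : Fin 4 => w (Sum.inr l)) := fun w hw hne => by
    rw [← wt_liftVec]
    refine hmin _ (mem_map_proj_fixedCode.1 hw) fun h => hne ?_
    rw [← proj_liftVec (p := 11) w, h, map_zero]
  refine ⟨hself', hlift, ?_⟩
  obtain ⟨v, hv, hv10⟩ := hex
  have hsum := orbitSum_mem_fixedCode stdPerm_pow_eq_one haut hv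
  refine exists_perm_eq_span_of_wt_mod_four hself' (fun w hw hzero => ?_) ⟨_, hsum, rfl⟩ ?_
  · by_contra hne
    have h := hlift w hw hne
    have hle : wt (fun l : Fin 4 => w (Sum.inr l)) ≤ 4 := Finset.card_le_univ _
    have hleft : wt (fun j : Fin 4 => w (Sum.inl j)) = 0 := by simp [wt, hzero]
    omega
  · rw [← wt_liftVec, liftVec_proj hsum.2]
    have h := wt_orbitSum_modEq_four (p := 11) hself.le haut hv
    rw [hv10] at h
    unfold Nat.ModEq at h
    omega
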